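/- arXiv:2101.03728 — 3 statements merged into one kernel-verified Lean document; each statement's English description precedes it below -/
import Mathlib

section
/- Let λ∈{1,−1}, t∈ℝ, τ∈(0,1/2], N a positive integer, and w∈H¹(𝕋), and let R₅ be defined as in the context. Then for every s∈(1/2,1): ‖R₅‖_{H^s} ≤ C τ^{3/2} ‖w‖_{H¹}³, where the constant C depends only on s. -/
/-!
Write `⟨k⟩ = (1 + k²)^{1/2}`, `δ = 1 - s` and `A_k = ⟨k⟩ |ŵ_k|`, so `A ∈ ℓ²`. In the integral
defining `R₅`, the first oscillatory factor is bounded by `2` and the second by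
`2 (τ |k₂ k₃|)^{1/2}` (interpolating `|e^{ix} - 1| ≤ min(2, |x|)`), which yields the power
`τ^{3/2}`. Since `k ≠ 0`, the factor `⟨k⟩^s / |k|` is at most `√2 ⟨k⟩^{-δ}`. Hence
`⟨k⟩^s |R̂₅(k)|` is bounded by `4 √2 τ^{3/2}` times
`∑ ⟨k⟩^{-δ} A_{-k₁} ⟨k₂⟩^{-1/2} A_{k₂} ⟨k₃⟩^{-1/2} A_{k₃}` over `k₁ + k₂ + k₃ = k`.

Cauchy–Schwarz in `(k₂, k₃)`, with `A_{k₂} A_{k₃}` as one factor, bounds the square of this sum by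
`‖A‖⁴ ∑ A_{-k₁}² ⟨k⟩^{-2δ} ⟨k₂⟩^{-1} ⟨k₃⟩^{-1}` (`R5_pointwise`). After summation over `k` it
remains to bound the sum of the kernel `⟨k⟩^{-2δ} ⟨k₂⟩^{-1} ⟨k₃⟩^{-1}` over `k - k₂ - k₃ = k₁`,
uniformly in `k₁` (`tsum_ker_le`). Moving decay from the largest of the three frequencies to
the other two (`ker_le`) dominates the kernel by products of two weights of the form `⟨·⟩^{-(1+δ)}`,
and each of these is summable because `s < 1`. The sums are taken in `ℝ≥0∞`, where no summability has
to be checked.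
-/


noncomputable section

open Complex MeasureTheory
open scoped BigOperators

/-- A function on the torus `𝕋 = (-π,π)` is represented by its sequence of Fourier
coefficients `f̂ : ℤ → ℂ`. -/
abbrev FSeq := ℤ → ℂ

/-- Membership in the Sobolev space `H^s(𝕋)`:
`∑_{k∈ℤ} (1+k²)^s |f̂_k|² < ∞`. -/
def InHs (s : ℝ) (a : FSeq) : Prop :=
  Summable fun k : ℤ => (1 + (k : ℝ) ^ 2) ^ s * ‖a k‖ ^ 2

/-- The `H^s(𝕋)` norm: `‖f‖_{H^s}² = 2π ∑_{k∈ℤ} (1+k²)^s |f̂_k|²`. -/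
def hnorm (s : ℝ) (a : FSeq) : ℝ :=
  Real.sqrt (2 * Real.pi * ∑' k : ℤ, (1 + (k : ℝ) ^ 2) ^ s * ‖a k‖ ^ 2)

/-- The defect term `R₅`. -/
def R5 (lam t τ : ℝ) (N : ℕ) (w : FSeq) : FSeq := fun k =>
  if k ≠ 0 ∧ |k| ≤ (N : ℤ) then
    Complex.I * (lam : ℂ) * ∑' p : ℤ × ℤ,
      (if |k - p.1| ≤ (N : ℤ) then
        (∫ s in (0 : ℝ)..τ, ((p.1 : ℂ) / (k : ℂ)) *
          Complex.exp (Complex.I * (t : ℂ) *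
            ((k : ℂ) ^ 2 + (p.1 : ℂ) ^ 2 - (p.2 : ℂ) ^ 2 - ((k - p.1 - p.2 : ℤ) : ℂ) ^ 2)) *
          (Complex.exp (2 * Complex.I * (s : ℂ) * (k : ℂ) * (p.1 : ℂ)) - 1) *
          (Complex.exp (2 * Complex.I * (s : ℂ) * (p.2 : ℂ) * ((k - p.1 - p.2 : ℤ) : ℂ)) - 1)) *
        (starRingEnd ℂ) (w (-p.1)) * w p.2 * w (k - p.1 - p.2)
      else 0)
  else 0


/-! ### Weights and the trilinear kernel -/

/-- The squared Japanese bracket `1 + k²`. -/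
def bracketSq (k : ℤ) : ℝ := 1 + (k : ℝ) ^ 2

lemma one_le_bracketSq (k : ℤ) : 1 ≤ bracketSq k := by
  unfold bracketSq
  nlinarith [sq_nonneg (k : ℝ)]

lemma bracketSq_pos (k : ℤ) : 0 < bracketSq k := lt_of_lt_of_le one_pos (one_le_bracketSq k)

/-- The kernel `⟨x⟩^{-2δ} ⟨y⟩^{-1} ⟨z⟩^{-1}` left over after Cauchy–Schwarz. -/
def ker (δ : ℝ) (x y z : ℤ) : ℝ :=
  bracketSq x ^ (-δ) * bracketSq y ^ (-(1 / 2) : ℝ) * bracketSq z ^ (-(1 / 2) : ℝ)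

lemma ker_nonneg (δ : ℝ) (x y z : ℤ) : 0 ≤ ker δ x y z := by
  have hx := bracketSq_pos x
  have hy := bracketSq_pos y
  have hz := bracketSq_pos z
  unfold ker
  positivity

/-- The summable weight `⟨k⟩^{-(1+δ)}`. -/
def decay (δ : ℝ) (k : ℤ) : ℝ := bracketSq k ^ (-((1 + δ) / 2))

lemma decay_nonneg (δ : ℝ) (k : ℤ) : 0 ≤ decay δ k :=
  Real.rpow_nonneg (bracketSq_pos k).le _

lemma summable_decay {δ : ℝ} (hδ : 0 < δ) : Summable (decay δ) := by
  refine Summable.of_norm_bounded_eventually (Real.summable_abs_int_rpow (b := 1 + δ) (by linarith)) ?_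
  have h0 : ∀ᶠ i : ℤ in Filter.cofinite, i ≠ 0 := by
    simpa using (Set.finite_singleton (0 : ℤ)).compl_mem_cofinite
  filter_upwards [h0] with i hi
  rw [Real.norm_of_nonneg (decay_nonneg δ i)]
  have hi' : 0 < |(i : ℝ)| := abs_pos.mpr (by exact_mod_cast hi)
  have h1 : |(i : ℝ)| ^ (-(1 + δ)) = (|(i : ℝ)| ^ 2) ^ (-((1 + δ) / 2)) := by
    rw [← Real.rpow_natCast, ← Real.rpow_mul hi'.le]
    congr 1
    push_cast
    ring
  rw [h1]
  unfold decay bracketSq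
  refine Real.rpow_le_rpow_of_nonpos (by positivity) ?_ (by linarith)
  rw [sq_abs]
  linarith

/-- If `X` dominates `Y` and `Z`, its decay `X^{-(a+b)}` may be shared out between them. -/
lemma rpow_share {X Y Z a b : ℝ} (hY : 1 ≤ Y) (hZ : 1 ≤ Z) (hYX : Y ≤ X) (hZX : Z ≤ X)
    (ha : 0 ≤ a) (hb : 0 ≤ b) : X ^ (-(a + b)) ≤ Y ^ (-a) * Z ^ (-b) := by
  have hX : 0 < X := by linarith
  rw [neg_add, Real.rpow_add hX]
  exact mul_le_mul (Real.rpow_le_rpow_of_nonpos (by linarith) hYX (by linarith))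
    (Real.rpow_le_rpow_of_nonpos (by linarith) hZX (by linarith)) (by positivity) (by positivity)

/-- Transferring decay from the largest of the three frequencies to the other two leaves two
weights `⟨·⟩^{-(1+δ)}`; the right-hand side adds up the three possible cases. -/
lemma ker_le {δ : ℝ} (hδ : 0 < δ) (hδ1 : δ < 1) (x y z : ℤ) :
    ker δ x y z ≤ decay δ x * decay δ y + decay δ x * decay δ z + decay δ y * decay δ z := by
  have key : ∀ X Y Z : ℝ, 1 ≤ X → 1 ≤ Y → 1 ≤ Z →
      X ^ (-δ) * Y ^ (-(1 / 2) : ℝ) * Z ^ (-(1 / 2) : ℝ) ≤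
        X ^ (-((1 + δ) / 2)) * Y ^ (-((1 + δ) / 2)) + X ^ (-((1 + δ) / 2)) * Z ^ (-((1 + δ) / 2))
          + Y ^ (-((1 + δ) / 2)) * Z ^ (-((1 + δ) / 2)) := by
    intro X Y Z hX hY hZ
    have hX0 : 0 < X := by linarith
    have hY0 : 0 < Y := by linarith
    have hZ0 : 0 < Z := by linarith
    have e : ∀ W : ℝ, 0 < W →
        W ^ (-((1 + δ) / 2)) = W ^ (-(δ / 2)) * W ^ (-(1 / 2) : ℝ) ∧
        W ^ (-((1 + δ) / 2)) = W ^ (-((1 - δ) / 2)) * W ^ (-δ) := by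
      intro W hW
      constructor <;> rw [← Real.rpow_add hW] <;> congr 1 <;> ring
    have p1 : 0 ≤ X ^ (-((1 + δ) / 2)) * Y ^ (-((1 + δ) / 2)) := by positivity
    have p2 : 0 ≤ X ^ (-((1 + δ) / 2)) * Z ^ (-((1 + δ) / 2)) := by positivity
    have p3 : 0 ≤ Y ^ (-((1 + δ) / 2)) * Z ^ (-((1 + δ) / 2)) := by positivity
    by_cases h1 : Y ≤ X ∧ Z ≤ X
    · have h := rpow_share hY hZ h1.1 h1.2 (a := δ / 2) (b := δ / 2) (by linarith) (by linarith)
      rw [show δ / 2 + δ / 2 = δ by ring] at h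
      have : X ^ (-δ) * Y ^ (-(1 / 2) : ℝ) * Z ^ (-(1 / 2) : ℝ) ≤
          Y ^ (-((1 + δ) / 2)) * Z ^ (-((1 + δ) / 2)) := by
        rw [(e Y hY0).1, (e Z hZ0).1]
        calc _ ≤ (Y ^ (-(δ / 2)) * Z ^ (-(δ / 2))) * Y ^ (-(1 / 2) : ℝ) * Z ^ (-(1 / 2) : ℝ) := by
              gcongr
          _ = _ := by ring
      linarith
    by_cases h2 : X ≤ Y ∧ Z ≤ Y
    · have h := rpow_share hX hZ h2.1 h2.2 (a := (1 - δ) / 2) (b := δ / 2) (by linarith)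
        (by linarith)
      rw [show (1 - δ) / 2 + δ / 2 = 1 / 2 by ring] at h
      have : X ^ (-δ) * Y ^ (-(1 / 2) : ℝ) * Z ^ (-(1 / 2) : ℝ) ≤
          X ^ (-((1 + δ) / 2)) * Z ^ (-((1 + δ) / 2)) := by
        rw [(e X hX0).2, (e Z hZ0).1]
        calc _ ≤ X ^ (-δ) * (X ^ (-((1 - δ) / 2)) * Z ^ (-(δ / 2))) * Z ^ (-(1 / 2) : ℝ) := by
              gcongr
          _ = _ := by ring
      linarith
    · have h3 : X ≤ Z ∧ Y ≤ Z := by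
        rcases le_total X Y with a | a <;> rcases le_total Y Z with b | b <;>
          rcases le_total X Z with c | c <;> grind
      have h := rpow_share hX hY h3.1 h3.2 (a := (1 - δ) / 2) (b := δ / 2) (by linarith)
        (by linarith)
      rw [show (1 - δ) / 2 + δ / 2 = 1 / 2 by ring] at h
      have : X ^ (-δ) * Y ^ (-(1 / 2) : ℝ) * Z ^ (-(1 / 2) : ℝ) ≤
          X ^ (-((1 + δ) / 2)) * Y ^ (-((1 + δ) / 2)) := by
        rw [(e X hX0).2, (e Y hY0).1]
        calc _ ≤ X ^ (-δ) * Y ^ (-(1 / 2) : ℝ) * (X ^ (-((1 - δ) / 2)) * Y ^ (-(δ / 2))) := by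
              gcongr
          _ = _ := by ring
      linarith
  exact key _ _ _ (one_le_bracketSq x) (one_le_bracketSq y) (one_le_bracketSq z)

/-! ### Sums in `ℝ≥0∞` -/

/-- Cauchy–Schwarz for series in `ℝ≥0∞`. -/
lemma ENNReal_tsum_mul_sq_le {ι : Type*} (f g : ι → ENNReal) :
    (∑' i, f i * g i) ^ 2 ≤ (∑' i, f i ^ 2) * ∑' i, g i ^ 2 := by
  let _ : MeasurableSpace ι := ⊤
  have h := ENNReal.lintegral_mul_le_Lp_mul_Lq (Measure.count : Measure ι)
    (Real.HolderConjugate.two_two) (f := f) (g := g)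
    (measurable_from_top).aemeasurable (measurable_from_top).aemeasurable
  simp only [lintegral_count, Pi.mul_apply, ENNReal.rpow_two] at h
  calc _ ≤ ((∑' i, f i ^ 2) ^ (1 / 2 : ℝ) * (∑' i, g i ^ 2) ^ (1 / 2 : ℝ)) ^ 2 := by gcongr
    _ = _ := by
      rw [mul_pow, ← ENNReal.rpow_two, ← ENNReal.rpow_two, ← ENNReal.rpow_mul, ← ENNReal.rpow_mul]
      norm_num

lemma tsum_mul_eq (f g : ℤ → ENNReal) :
    ∑' (a : ℤ) (b : ℤ), f a * g b = (∑' a, f a) * ∑' b, g b := by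
  simp_rw [ENNReal.tsum_mul_left, ENNReal.tsum_mul_right]

/-- Uniformly in `m`, the kernel summed over the plane `x - y - z = m` is bounded. -/
lemma tsum_ker_le {δ : ℝ} (hδ : 0 < δ) (hδ1 : δ < 1) (m : ℤ) :
    ∑' (k : ℤ) (q : ℤ), ENNReal.ofReal (ker δ k q (k - m - q)) ≤
      3 * (∑' k, ENNReal.ofReal (decay δ k)) ^ 2 := by
  set G : ℤ → ENNReal := fun k => ENNReal.ofReal (decay δ k) with hG
  have h1 : ∀ k q : ℤ, ENNReal.ofReal (ker δ k q (k - m - q)) ≤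
      G k * G q + G k * G (k - m - q) + G q * G (k - m - q) := by
    intro k q
    have a := decay_nonneg δ k
    have b := decay_nonneg δ q
    have c := decay_nonneg δ (k - m - q)
    simp only [hG]
    rw [← ENNReal.ofReal_mul a, ← ENNReal.ofReal_mul a, ← ENNReal.ofReal_mul b,
      ← ENNReal.ofReal_add (by positivity) (by positivity),
      ← ENNReal.ofReal_add (by positivity) (by positivity)]
    exact ENNReal.ofReal_le_ofReal (ker_le hδ hδ1 _ _ _)
  have r1 : ∀ k : ℤ, ∑' q : ℤ, G (k - m - q) = ∑' q, G q := fun k =>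
    (Equiv.subLeft (k - m)).tsum_eq G
  have r2 : ∀ q : ℤ, ∑' k : ℤ, G (k - m - q) = ∑' k, G k := fun q => by
    rw [← (Equiv.subRight (m + q)).tsum_eq G]
    simp [Equiv.subRight, sub_sub]
  have s1 : ∑' (k : ℤ) (q : ℤ), G k * G (k - m - q) = (∑' k, G k) * ∑' k, G k := by
    simp_rw [ENNReal.tsum_mul_left, r1, ENNReal.tsum_mul_right]
  have s2 : ∑' (k : ℤ) (q : ℤ), G q * G (k - m - q) = (∑' k, G k) * ∑' k, G k := by
    rw [ENNReal.tsum_comm]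
    simp_rw [ENNReal.tsum_mul_left, r2, ENNReal.tsum_mul_right]
  calc _ ≤ ∑' (k : ℤ) (q : ℤ), (G k * G q + G k * G (k - m - q) + G q * G (k - m - q)) :=
        ENNReal.tsum_le_tsum fun k => ENNReal.tsum_le_tsum fun q => h1 k q
    _ = _ := by
      simp_rw [ENNReal.tsum_add]
      rw [s1, s2, tsum_mul_eq]
      ring

/-! ### The oscillatory factor -/

lemma norm_exp_sub_one_le_two (x : ℝ) : ‖Complex.exp (Complex.I * x) - 1‖ ≤ 2 := by
  rw [Complex.norm_exp_I_mul_ofReal_sub_one, norm_mul, Real.norm_eq_abs, Real.norm_eq_abs]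
  have := Real.abs_sin_le_one (x / 2)
  norm_num
  linarith

/-- Interpolation between the bounds `2` and `|x|`. -/
lemma norm_exp_sub_one_le_sqrt (x : ℝ) :
    ‖Complex.exp (Complex.I * x) - 1‖ ≤ Real.sqrt (2 * |x|) := by
  apply Real.le_sqrt_of_sq_le
  rw [sq]
  exact mul_le_mul (norm_exp_sub_one_le_two x) Real.norm_exp_I_mul_ofReal_sub_one_le
    (norm_nonneg _) (by norm_num)

lemma norm_integral_le {τ : ℝ} (hτ : 0 < τ) (t : ℝ) (k p q r : ℤ) :
    ‖∫ s in (0 : ℝ)..τ, ((p : ℂ) / (k : ℂ)) *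
          Complex.exp (Complex.I * (t : ℂ) *
            ((k : ℂ) ^ 2 + (p : ℂ) ^ 2 - (q : ℂ) ^ 2 - (r : ℂ) ^ 2)) *
          (Complex.exp (2 * Complex.I * (s : ℂ) * (k : ℂ) * (p : ℂ)) - 1) *
          (Complex.exp (2 * Complex.I * (s : ℂ) * (q : ℂ) * (r : ℂ)) - 1)‖ ≤
      4 * (τ * Real.sqrt τ) * (|(p : ℝ)| / |(k : ℝ)|) *
        (Real.sqrt |(q : ℝ)| * Real.sqrt |(r : ℝ)|) := by
  have h := intervalIntegral.norm_integral_le_of_norm_le_const (a := 0) (b := τ)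
    (C := (|(p : ℝ)| / |(k : ℝ)|) * 1 * 2 *
      (2 * (Real.sqrt τ * (Real.sqrt |(q : ℝ)| * Real.sqrt |(r : ℝ)|))))
    (f := fun s : ℝ => ((p : ℂ) / (k : ℂ)) *
          Complex.exp (Complex.I * (t : ℂ) *
            ((k : ℂ) ^ 2 + (p : ℂ) ^ 2 - (q : ℂ) ^ 2 - (r : ℂ) ^ 2)) *
          (Complex.exp (2 * Complex.I * (s : ℂ) * (k : ℂ) * (p : ℂ)) - 1) *
          (Complex.exp (2 * Complex.I * (s : ℂ) * (q : ℂ) * (r : ℂ)) - 1)) ?_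
  · refine h.trans (le_of_eq ?_)
    rw [sub_zero, abs_of_pos hτ]
    ring
  · intro s hs
    rw [Set.uIoc_of_le hτ.le] at hs
    have e1 : Complex.I * (t : ℂ) * ((k : ℂ) ^ 2 + (p : ℂ) ^ 2 - (q : ℂ) ^ 2 - (r : ℂ) ^ 2) =
        ((t * ((k : ℝ) ^ 2 + (p : ℝ) ^ 2 - (q : ℝ) ^ 2 - (r : ℝ) ^ 2) : ℝ) : ℂ) * Complex.I := by
      push_cast
      ring
    have e2 : ∀ a b : ℤ, 2 * Complex.I * (s : ℂ) * (a : ℂ) * (b : ℂ) =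
        Complex.I * ((2 * s * a * b : ℝ) : ℂ) := by
      intro a b
      push_cast
      ring
    rw [e1, e2, e2, norm_mul, norm_mul, norm_mul, Complex.norm_exp_ofReal_mul_I, norm_div,
      Complex.norm_intCast, Complex.norm_intCast]
    gcongr
    · exact norm_exp_sub_one_le_two _
    · refine (norm_exp_sub_one_le_sqrt _).trans ?_
      have : 2 * (Real.sqrt τ * (Real.sqrt |(q : ℝ)| * Real.sqrt |(r : ℝ)|)) =
          Real.sqrt (4 * (τ * (|(q : ℝ)| * |(r : ℝ)|))) := by
        rw [Real.sqrt_mul (by norm_num), Real.sqrt_mul hτ.le, Real.sqrt_mul (abs_nonneg _)]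
        congr 1
        rw [show (4 : ℝ) = 2 ^ 2 by norm_num, Real.sqrt_sq (by norm_num)]
      rw [this]
      apply Real.sqrt_le_sqrt
      rw [abs_mul, abs_mul, abs_of_pos (by linarith [hs.1] : (0 : ℝ) < 2 * s)]
      have : s * (|(q : ℝ)| * |(r : ℝ)|) ≤ τ * (|(q : ℝ)| * |(r : ℝ)|) := by
        gcongr
        exact hs.2
      linarith

/-! ### The pointwise estimate -/

lemma abs_le_sqrt_bracketSq (k : ℤ) : |(k : ℝ)| ≤ Real.sqrt (bracketSq k) := by
  apply Real.abs_le_sqrt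
  unfold bracketSq
  linarith

lemma sqrt_abs_le (k : ℤ) :
    Real.sqrt |(k : ℝ)| ≤
      Real.sqrt (bracketSq k) * Real.sqrt (bracketSq k ^ (-(1 / 2) : ℝ)) := by
  have hk := bracketSq_pos k
  rw [← Real.sqrt_mul hk.le]
  apply Real.sqrt_le_sqrt
  refine (abs_le_sqrt_bracketSq k).trans (le_of_eq ?_)
  nth_rewrite 2 [← Real.rpow_one (bracketSq k)]
  rw [← Real.rpow_add hk, Real.sqrt_eq_rpow]
  norm_num

/-- This is where `k ≠ 0` enters: `⟨k⟩ ≤ √2 |k|`. -/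
lemma weight_div_le {s : ℝ} {k : ℤ} (hk : k ≠ 0) :
    Real.sqrt (bracketSq k ^ s) / |(k : ℝ)| ≤
      Real.sqrt 2 * Real.sqrt (bracketSq k ^ (-(1 - s))) := by
  have hb := bracketSq_pos k
  have hk1 : (1 : ℝ) ≤ |(k : ℝ)| := by exact_mod_cast Int.one_le_abs hk
  rw [div_le_iff₀ (by linarith), ← Real.sqrt_sq (abs_nonneg (k : ℝ)),
    ← Real.sqrt_mul (by norm_num), ← Real.sqrt_mul (by positivity)]
  apply Real.sqrt_le_sqrt
  have h1 : bracketSq k ^ s = bracketSq k ^ (-(1 - s)) * bracketSq k := by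
    nth_rewrite 3 [← Real.rpow_one (bracketSq k)]
    rw [← Real.rpow_add hb]
    congr 1
    ring
  have h2 : bracketSq k ≤ 2 * |(k : ℝ)| ^ 2 := by
    unfold bracketSq
    rw [sq_abs]
    nlinarith [sq_abs (k : ℝ)]
  rw [h1]
  calc _ ≤ bracketSq k ^ (-(1 - s)) * (2 * |(k : ℝ)| ^ 2) := by gcongr
    _ = _ := by ring

/-- Bound of one frequency interaction by the product of the two Cauchy–Schwarz factors. -/
lemma term_le {s τ : ℝ} (hτ : 0 < τ) {k : ℤ} (hk : k ≠ 0) (p q r : ℤ) {A x y z : ℝ}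
    (hx : 0 ≤ x) (hy : 0 ≤ y) (hz : 0 ≤ z)
    (hA : A ≤ 4 * (τ * Real.sqrt τ) * (|(p : ℝ)| / |(k : ℝ)|) *
        (Real.sqrt |(q : ℝ)| * Real.sqrt |(r : ℝ)|)) :
    Real.sqrt (bracketSq k ^ s) * (A * x * y * z) ≤
      (4 * Real.sqrt 2 * (τ * Real.sqrt τ)) *
        ((Real.sqrt (bracketSq q) * y * (Real.sqrt (bracketSq r) * z)) *
          (Real.sqrt (bracketSq p) * x * Real.sqrt (ker (1 - s) k q r))) := by
  have hbk := bracketSq_pos k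
  have hbq := bracketSq_pos q
  have hbr := bracketSq_pos r
  unfold ker
  rw [Real.sqrt_mul (by positivity), Real.sqrt_mul (by positivity)]
  calc _ ≤ Real.sqrt (bracketSq k ^ s) * ((4 * (τ * Real.sqrt τ) * (|(p : ℝ)| / |(k : ℝ)|) *
        (Real.sqrt |(q : ℝ)| * Real.sqrt |(r : ℝ)|)) * x * y * z) := by gcongr
    _ = 4 * (τ * Real.sqrt τ) * (Real.sqrt (bracketSq k ^ s) / |(k : ℝ)|) * |(p : ℝ)| *
        Real.sqrt |(q : ℝ)| * Real.sqrt |(r : ℝ)| * x * y * z := by ring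
    _ ≤ 4 * (τ * Real.sqrt τ) * (Real.sqrt 2 * Real.sqrt (bracketSq k ^ (-(1 - s)))) *
        Real.sqrt (bracketSq p) *
        (Real.sqrt (bracketSq q) * Real.sqrt (bracketSq q ^ (-(1 / 2) : ℝ))) *
        (Real.sqrt (bracketSq r) * Real.sqrt (bracketSq r ^ (-(1 / 2) : ℝ))) * x * y * z := by
      gcongr
      · exact weight_div_le hk
      · exact abs_le_sqrt_bracketSq p
      · exact sqrt_abs_le q
      · exact sqrt_abs_le r
    _ = _ := by ring

/-- The energy density `⟨k⟩² |ŵ_k|²` as an extended nonnegative real. -/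
def energy (w : FSeq) (k : ℤ) : ENNReal := ENNReal.ofReal (bracketSq k * ‖w k‖ ^ 2)

lemma R5_pointwise (s lam t τ : ℝ) (hlam : lam = 1 ∨ lam = -1) (hτ : 0 < τ) (N : ℕ) (w : FSeq)
    (k : ℤ) :
    ENNReal.ofReal ((1 + (k : ℝ) ^ 2) ^ s * ‖R5 lam t τ N w k‖ ^ 2) ≤
      ENNReal.ofReal (32 * τ ^ 3) * ((∑' q, energy w q) ^ 2 *
        ∑' p : ℤ × ℤ, energy w (-p.1) * ENNReal.ofReal (ker (1 - s) k p.2 (k - p.1 - p.2))) := by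
  by_cases hk : k ≠ 0 ∧ |k| ≤ (N : ℤ)
  swap
  · simp [R5, hk]
  set c : ℝ := 4 * Real.sqrt 2 * (τ * Real.sqrt τ) with hc
  have hc0 : 0 ≤ c := by positivity
  have hc2 : c ^ 2 = 32 * τ ^ 3 := by
    rw [hc, mul_pow, mul_pow, mul_pow, Real.sq_sqrt (by norm_num), Real.sq_sqrt hτ.le]
    ring
  have hbk := bracketSq_pos k
  set f : ℤ × ℤ → ℝ := fun p => Real.sqrt (bracketSq p.2) * ‖w p.2‖ *
    (Real.sqrt (bracketSq (k - p.1 - p.2)) * ‖w (k - p.1 - p.2)‖) with hf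
  set g : ℤ × ℤ → ℝ := fun p => Real.sqrt (bracketSq p.1) * ‖w (-p.1)‖ *
    Real.sqrt (ker (1 - s) k p.2 (k - p.1 - p.2)) with hg
  have hf0 : ∀ p, 0 ≤ f p := fun p => by simp only [hf]; positivity
  have hg0 : ∀ p, 0 ≤ g p := fun p => by simp only [hg]; positivity
  have hlam' : ‖(lam : ℂ)‖ₑ = 1 := by
    rcases hlam with h | h <;> simp [h]
  have h1 : ENNReal.ofReal (Real.sqrt (bracketSq k ^ s) * ‖R5 lam t τ N w k‖) ≤
      ENNReal.ofReal c * ∑' p, ENNReal.ofReal (f p) * ENNReal.ofReal (g p) := by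
    rw [ENNReal.ofReal_mul (Real.sqrt_nonneg _), ofReal_norm]
    unfold R5
    rw [if_pos hk, enorm_mul, enorm_mul, hlam']
    have hI : ‖Complex.I‖ₑ = 1 := by simp [← ofReal_norm]
    rw [hI, one_mul, one_mul, ← ENNReal.tsum_mul_left]
    refine (mul_le_mul_right enorm_tsum_le_tsum_enorm _).trans ?_
    rw [← ENNReal.tsum_mul_left]
    refine ENNReal.tsum_le_tsum fun p => ?_
    rw [← ENNReal.ofReal_mul (hf0 p), ← ENNReal.ofReal_mul hc0]
    split_ifs with hN
    · rw [← ofReal_norm, ← ENNReal.ofReal_mul (Real.sqrt_nonneg _)]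
      apply ENNReal.ofReal_le_ofReal
      rw [norm_mul, norm_mul, norm_mul, RCLike.norm_conj]
      exact term_le hτ hk.1 _ _ _ (norm_nonneg _) (norm_nonneg _) (norm_nonneg _)
        (norm_integral_le hτ t k p.1 p.2 (k - p.1 - p.2))
    · simp
  have h2 : ENNReal.ofReal ((1 + (k : ℝ) ^ 2) ^ s * ‖R5 lam t τ N w k‖ ^ 2) =
      ENNReal.ofReal (Real.sqrt (bracketSq k ^ s) * ‖R5 lam t τ N w k‖) ^ 2 := by
    rw [← ENNReal.ofReal_pow (by positivity), mul_pow, Real.sq_sqrt (by positivity)]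
    rfl
  have hff : ∑' p, ENNReal.ofReal (f p) ^ 2 = (∑' q, energy w q) ^ 2 := by
    have : ∀ p : ℤ × ℤ, ENNReal.ofReal (f p) ^ 2 =
        energy w p.2 * energy w (k - p.1 - p.2) := by
      intro p
      have a := bracketSq_pos p.2
      have b := bracketSq_pos (k - p.1 - p.2)
      unfold energy
      rw [← ENNReal.ofReal_pow (hf0 p), ← ENNReal.ofReal_mul (by positivity)]
      simp only [hf]
      rw [mul_pow, mul_pow, mul_pow, Real.sq_sqrt a.le, Real.sq_sqrt b.le]
    simp_rw [this]
    rw [ENNReal.tsum_prod (f := fun a b => energy w b * energy w (k - a - b)), ENNReal.tsum_comm]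
    have r : ∀ b : ℤ, ∑' a : ℤ, energy w (k - a - b) = ∑' a, energy w a := fun b => by
      rw [← (Equiv.subLeft (k - b)).tsum_eq (energy w)]
      refine tsum_congr fun a => ?_
      rw [Equiv.subLeft_apply]
      congr 1
      ring
    simp_rw [ENNReal.tsum_mul_left, r, ENNReal.tsum_mul_right]
    ring
  have hgg : ∀ p : ℤ × ℤ, ENNReal.ofReal (g p) ^ 2 =
      energy w (-p.1) * ENNReal.ofReal (ker (1 - s) k p.2 (k - p.1 - p.2)) := by
    intro p
    have a := bracketSq_pos p.1
    have hneg : bracketSq (-p.1) = bracketSq p.1 := by simp [bracketSq]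
    unfold energy
    rw [← ENNReal.ofReal_pow (hg0 p), hneg, ← ENNReal.ofReal_mul (by positivity)]
    simp only [hg]
    rw [mul_pow, mul_pow, Real.sq_sqrt a.le, Real.sq_sqrt (ker_nonneg _ _ _ _)]
  rw [h2]
  calc _ ≤ (ENNReal.ofReal c * ∑' p, ENNReal.ofReal (f p) * ENNReal.ofReal (g p)) ^ 2 := by
        gcongr
    _ = ENNReal.ofReal (32 * τ ^ 3) *
        (∑' p, ENNReal.ofReal (f p) * ENNReal.ofReal (g p)) ^ 2 := by
      rw [mul_pow, ← ENNReal.ofReal_pow hc0, hc2]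
    _ ≤ _ := by
      refine mul_le_mul_right ((ENNReal_tsum_mul_sq_le _ _).trans ?_) _
      rw [hff]
      simp_rw [hgg]
      exact le_rfl

lemma R5_sum_le {s : ℝ} (hs0 : 0 < s) (hs1 : s < 1) (lam t τ : ℝ) (hlam : lam = 1 ∨ lam = -1)
    (hτ : 0 < τ) (N : ℕ) (w : FSeq) :
    ∑' k : ℤ, ENNReal.ofReal ((1 + (k : ℝ) ^ 2) ^ s * ‖R5 lam t τ N w k‖ ^ 2) ≤
      ENNReal.ofReal (32 * τ ^ 3) * ((∑' q, energy w q) ^ 2 *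
        ((∑' q, energy w q) * (3 * (∑' k, ENNReal.ofReal (decay (1 - s) k)) ^ 2))) := by
  refine (ENNReal.tsum_le_tsum fun k => R5_pointwise s lam t τ hlam hτ N w k).trans ?_
  rw [ENNReal.tsum_mul_left, ENNReal.tsum_mul_left]
  gcongr
  have e : ∀ k : ℤ, ∑' p : ℤ × ℤ,
      energy w (-p.1) * ENNReal.ofReal (ker (1 - s) k p.2 (k - p.1 - p.2)) =
      ∑' m : ℤ, energy w (-m) * ∑' q : ℤ, ENNReal.ofReal (ker (1 - s) k q (k - m - q)) := by
    intro k
    rw [ENNReal.tsum_prod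
      (f := fun m q => energy w (-m) * ENNReal.ofReal (ker (1 - s) k q (k - m - q)))]
    simp_rw [ENNReal.tsum_mul_left]
  simp_rw [e]
  rw [ENNReal.tsum_comm]
  simp_rw [ENNReal.tsum_mul_left]
  calc _ ≤ ∑' m : ℤ, energy w (-m) * (3 * (∑' k, ENNReal.ofReal (decay (1 - s) k)) ^ 2) := by
        refine ENNReal.tsum_le_tsum fun m => mul_le_mul_right ?_ _
        exact tsum_ker_le (by linarith) (by linarith) m
    _ = _ := by
      rw [ENNReal.tsum_mul_right]
      congr 1
      exact (Equiv.neg ℤ).tsum_eq (energy w)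

theorem R5_Hs_bound (s : ℝ) (hs : s ∈ Set.Ioo (1 / 2 : ℝ) 1) :
    ∃ C : ℝ, 0 < C ∧ ∀ lam : ℝ, (lam = 1 ∨ lam = -1) → ∀ t τ : ℝ, 0 < τ → τ ≤ 1 / 2 →
      ∀ N : ℕ, 0 < N → ∀ w : FSeq, InHs 1 w →
      hnorm s (R5 lam t τ N w) ≤ C * τ ^ ((3 : ℝ) / 2) * hnorm 1 w ^ 3 := by
  have hδ : 0 < 1 - s := by linarith [hs.2]
  set S : ℝ := ∑' k, decay (1 - s) k with hS
  have hS0 : 0 ≤ S := tsum_nonneg fun k => decay_nonneg _ k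
  refine ⟨10 * (S + 1), by linarith, ?_⟩
  intro lam hlam t τ hτ _ N _ w hw
  set M : ℝ := ∑' k : ℤ, (1 + (k : ℝ) ^ 2) ^ (1 : ℝ) * ‖w k‖ ^ 2 with hM
  have hM0 : 0 ≤ M := tsum_nonneg fun k => by positivity
  have hSe : ∑' k, ENNReal.ofReal (decay (1 - s) k) = ENNReal.ofReal S :=
    (ENNReal.ofReal_tsum_of_nonneg (decay_nonneg _) (summable_decay hδ)).symm
  have hMe : ∑' q, energy w q = ENNReal.ofReal M := by
    rw [hM, ENNReal.ofReal_tsum_of_nonneg (fun k => by positivity) hw]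
    simp only [energy, bracketSq, Real.rpow_one]
  set P : ℝ := ∑' k : ℤ, (1 + (k : ℝ) ^ 2) ^ s * ‖R5 lam t τ N w k‖ ^ 2 with hP
  have hPle : P ≤ 96 * τ ^ 3 * M ^ 3 * S ^ 2 := by
    have h := R5_sum_le (by linarith [hs.1]) hs.2 lam t τ hlam hτ N w
    have h3 : (3 : ENNReal) = ENNReal.ofReal 3 := by simp
    rw [hSe, hMe, h3, ← ENNReal.ofReal_pow hS0, ← ENNReal.ofReal_pow hM0,
      ← ENNReal.ofReal_mul (by norm_num), ← ENNReal.ofReal_mul hM0,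
      ← ENNReal.ofReal_mul (by positivity), ← ENNReal.ofReal_mul (by positivity)] at h
    have h' := ENNReal.toReal_le_of_le_ofReal (by positivity) h
    rw [ENNReal.tsum_toReal_eq (fun _ => ENNReal.ofReal_ne_top)] at h'
    have e : ∀ k : ℤ, (ENNReal.ofReal ((1 + (k : ℝ) ^ 2) ^ s * ‖R5 lam t τ N w k‖ ^ 2)).toReal =
        (1 + (k : ℝ) ^ 2) ^ s * ‖R5 lam t τ N w k‖ ^ 2 := fun k =>
      ENNReal.toReal_ofReal (by positivity)
    simp_rw [e] at h'
    calc P ≤ _ := h'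
      _ = _ := by ring
  have hτ3 : (τ ^ ((3 : ℝ) / 2)) ^ 2 = τ ^ 3 := by
    rw [← Real.rpow_natCast, ← Real.rpow_mul hτ.le, ← Real.rpow_natCast]
    norm_num
  have hw2 : hnorm 1 w ^ 2 = 2 * Real.pi * M := by
    unfold hnorm
    rw [Real.sq_sqrt (by positivity)]
  have hw0 : 0 ≤ hnorm 1 w := Real.sqrt_nonneg _
  have hpi : 1 ≤ 2 * Real.pi := by linarith [Real.pi_gt_three]
  have hpi3 : 2 * Real.pi ≤ (2 * Real.pi) ^ 3 := le_self_pow₀ hpi (by norm_num)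
  have hS2 : 96 * S ^ 2 ≤ 100 * (S + 1) ^ 2 := by nlinarith
  unfold hnorm
  rw [← hP]
  refine Real.sqrt_le_iff.mpr ⟨by positivity, ?_⟩
  calc 2 * Real.pi * P ≤ 2 * Real.pi * (96 * τ ^ 3 * M ^ 3 * S ^ 2) := by gcongr
    _ = (2 * Real.pi) * (96 * S ^ 2) * (τ ^ 3 * M ^ 3) := by ring
    _ ≤ (2 * Real.pi) ^ 3 * (100 * (S + 1) ^ 2) * (τ ^ 3 * M ^ 3) := by gcongr
    _ = 100 * (S + 1) ^ 2 * τ ^ 3 * (2 * Real.pi * M) ^ 3 := by ring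
    _ = 100 * (S + 1) ^ 2 * (τ ^ ((3 : ℝ) / 2)) ^ 2 * (hnorm 1 w ^ 2) ^ 3 := by rw [hτ3, hw2]
    _ = (10 * (S + 1) * τ ^ ((3 : ℝ) / 2) * hnorm 1 w ^ 3) ^ 2 := by ring

end
end

section
/- For all v∈H¹(𝕋) and f∈L²(𝕋): ∑_{k∈ℤ} ( ∑_{k₁+k₂+k₃=k} |k₁| |v̂_{k₁}| |v̂_{k₂}| |v̂_{k₃}| ) |f̂_k| ≤ C‖f‖_{L²}‖v‖_{H¹}³, where the inner sum is over all triples of integers (k₁,k₂,k₃) with k₁+k₂+k₃=k and C is an absolute constant. -/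
/-!
Write `A k = |k| |v̂_k|`, `B k = |v̂_k|`, `F k = |f̂_k|`. Substituting `q = k - p₁ - p₂`, the left side
is `∑_{p₂, q} B p₂ * B q * ∑_k A (k - p₂ - q) * F k`. By Cauchy–Schwarz and translation invariance
the inner sum is at most `‖A‖_{ℓ²} ‖F‖_{ℓ²}`, so the whole is at most
`‖B‖_{ℓ¹}² ‖A‖_{ℓ²} ‖F‖_{ℓ²}` (`tsum_cubic_le`). Finally `‖A‖_{ℓ²} ≤ ‖v‖_{H¹}`,
`‖F‖_{ℓ²} ≤ ‖f‖_{L²}` (`l2norm_le_hnorm`), and a second Cauchy–Schwarz against the weight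
`(1 + k²)^{-1/2} ∈ ℓ²` gives `‖B‖_{ℓ¹} ≤ c ‖v‖_{H¹}`.

All estimates are carried out in `[0, ∞]`, where sums may be rearranged freely; `ofReal_tsum_le`
transfers the result to real sums without any summability proof for the cubic sum.
-/

noncomputable section

open Complex MeasureTheory
open scoped BigOperators

/-- The `ℓ²(ℤ)` norm of a `[0, ∞]`-valued sequence. -/
def l2norm (a : ℤ → ENNReal) : ENNReal := (∑' k, a k ^ (2 : ℝ)) ^ (1 / 2 : ℝ)

lemma tsum_mul_le_l2norm (a b : ℤ → ENNReal) : ∑' k, a k * b k ≤ l2norm a * l2norm b := by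
  have h := ENNReal.lintegral_mul_le_Lp_mul_Lq (Measure.count : Measure ℤ)
    Real.HolderConjugate.two_two
    (f := a) (g := b) (Measurable.of_discrete.aemeasurable) (Measurable.of_discrete.aemeasurable)
  simpa [lintegral_count, l2norm] using h

lemma l2norm_shift (a : ℤ → ENNReal) (c : ℤ) : l2norm (fun k => a (k - c)) = l2norm a := by
  unfold l2norm
  rw [← (Equiv.subRight c).tsum_eq (fun k => a k ^ (2 : ℝ))]
  rfl

/-- Holds without summability, since the real `∑'` is then `0`. -/
lemma ofReal_tsum_le {ι : Type*} (g : ι → ℝ) (hg : ∀ i, 0 ≤ g i) :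
    ENNReal.ofReal (∑' i, g i) ≤ ∑' i, ENNReal.ofReal (g i) := by
  by_cases h : Summable g
  · exact (ENNReal.ofReal_tsum_of_nonneg hg h).le
  · simp [tsum_eq_zero_of_not_summable h]

/-- The trilinear convolution bound `ℓ² * ℓ¹ * ℓ¹ ⊆ ℓ²`, in dual form. -/
lemma tsum_cubic_le (A B F : ℤ → ENNReal) :
    ∑' k : ℤ, (∑' p : ℤ × ℤ, A p.1 * B p.2 * B (k - p.1 - p.2)) * F k
      ≤ (∑' k, B k) * (∑' k, B k) * (l2norm A * l2norm F) := by
  have h1 : ∀ k : ℤ, (∑' p : ℤ × ℤ, A p.1 * B p.2 * B (k - p.1 - p.2)) * F k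
      = ∑' m : ℤ, ∑' q : ℤ, B m * B q * (A (k - (m + q)) * F k) := by
    intro k
    rw [ENNReal.tsum_prod', ENNReal.tsum_comm, ← ENNReal.tsum_mul_right]
    refine tsum_congr fun m => ?_
    rw [← ENNReal.tsum_mul_right, ← (Equiv.subLeft (k - m)).tsum_eq]
    refine tsum_congr fun q => ?_
    simp only [Equiv.subLeft_apply]
    rw [show k - (k - m - q) - m = q by ring, show k - m - q = k - (m + q) by ring]
    ring
  calc _ = ∑' m : ℤ, ∑' q : ℤ, B m * B q * ∑' k, A (k - (m + q)) * F k := by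
        simp_rw [h1, ← ENNReal.tsum_mul_left]
        rw [ENNReal.tsum_comm]
        exact tsum_congr fun m => ENNReal.tsum_comm
    _ ≤ ∑' m : ℤ, ∑' q : ℤ, B m * B q * (l2norm A * l2norm F) := by
        refine ENNReal.tsum_le_tsum fun m => ENNReal.tsum_le_tsum fun q => ?_
        gcongr
        refine (tsum_mul_le_l2norm _ _).trans_eq ?_
        rw [l2norm_shift A (m + q)]
    _ = _ := by
        simp_rw [ENNReal.tsum_mul_right, ENNReal.tsum_mul_left, ENNReal.tsum_mul_right]

lemma l2norm_le_hnorm (s : ℝ) (a : FSeq) (ha : InHs s a) (g : ℤ → ℝ) (hg : ∀ k, 0 ≤ g k)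
    (h : ∀ k, g k ^ 2 ≤ (1 + (k : ℝ) ^ 2) ^ s * ‖a k‖ ^ 2) :
    l2norm (fun k => ENNReal.ofReal (g k)) ≤ ENNReal.ofReal (hnorm s a) := by
  have h0 : ∀ k : ℤ, 0 ≤ (1 + (k : ℝ) ^ 2) ^ s * ‖a k‖ ^ 2 := fun k => by positivity
  have hS : 0 ≤ ∑' k : ℤ, (1 + (k : ℝ) ^ 2) ^ s * ‖a k‖ ^ 2 := tsum_nonneg h0
  unfold l2norm hnorm
  rw [Real.sqrt_eq_rpow, ← ENNReal.ofReal_rpow_of_nonneg (by positivity) (by norm_num)]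
  refine ENNReal.rpow_le_rpow ?_ (by norm_num)
  calc _ ≤ ∑' k : ℤ, ENNReal.ofReal ((1 + (k : ℝ) ^ 2) ^ s * ‖a k‖ ^ 2) := by
        refine ENNReal.tsum_le_tsum fun k => ?_
        rw [ENNReal.rpow_two, ← ENNReal.ofReal_pow (hg k)]
        exact ENNReal.ofReal_le_ofReal (h k)
    _ = ENNReal.ofReal (∑' k : ℤ, (1 + (k : ℝ) ^ 2) ^ s * ‖a k‖ ^ 2) :=
        (ENNReal.ofReal_tsum_of_nonneg h0 ha).symm
    _ ≤ _ := by
        refine ENNReal.ofReal_le_ofReal (le_mul_of_one_le_left hS ?_)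
        linarith [Real.pi_gt_three]

lemma summable_inv_one_add_sq : Summable fun k : ℤ => (1 + (k : ℝ) ^ 2)⁻¹ := by
  refine Summable.of_norm_bounded_eventually
    (Real.summable_one_div_int_pow.mpr (one_lt_two : 1 < 2)) ?_
  have h : ∀ᶠ k : ℤ in Filter.cofinite, k ≠ 0 := (Set.finite_singleton (0 : ℤ)).eventually_cofinite_notMem
  filter_upwards [h] with k hk
  have hk' : (0 : ℝ) < (k : ℝ) ^ 2 := by positivity
  rw [Real.norm_of_nonneg (by positivity), one_div]
  exact inv_anti₀ hk' (by linarith)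

/-- The weight `(1 + k²)^{-1/2}`, whose membership in `ℓ²` gives `H¹ ⊆ ℓ¹` on the Fourier side. -/
def sobolevWeight (k : ℤ) : ENNReal := ENNReal.ofReal (√(1 + (k : ℝ) ^ 2))⁻¹

lemma l2norm_sobolevWeight_ne_top : l2norm sobolevWeight ≠ ⊤ := by
  refine ENNReal.rpow_ne_top_of_nonneg (by norm_num) ?_
  have : ∀ k : ℤ, sobolevWeight k ^ (2 : ℝ) = ENNReal.ofReal (1 + (k : ℝ) ^ 2)⁻¹ := by
    intro k
    rw [sobolevWeight, ENNReal.rpow_two, ← ENNReal.ofReal_pow (by positivity), inv_pow,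
      Real.sq_sqrt (by positivity)]
  simp_rw [this]
  exact summable_inv_one_add_sq.tsum_ofReal_ne_top

lemma tsum_norm_le_hnorm (v : FSeq) (hv : InHs 1 v) :
    ∑' k, ENNReal.ofReal ‖v k‖ ≤ l2norm sobolevWeight * ENNReal.ofReal (hnorm 1 v) := by
  calc _ = ∑' k : ℤ, sobolevWeight k * ENNReal.ofReal (√(1 + (k : ℝ) ^ 2) * ‖v k‖) := by
        refine tsum_congr fun k => ?_
        have : √(1 + (k : ℝ) ^ 2) ≠ 0 := by positivity
        rw [sobolevWeight, ← ENNReal.ofReal_mul (by positivity), inv_mul_cancel_left₀ this]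
    _ ≤ _ := tsum_mul_le_l2norm _ _
    _ ≤ _ := by
        gcongr
        refine l2norm_le_hnorm 1 v hv _ (fun k => by positivity) fun k => ?_
        rw [mul_pow, Real.sq_sqrt (by positivity), Real.rpow_one]

theorem cubic_pairing_bound :
    ∃ C : ℝ, 0 < C ∧ ∀ v f : FSeq, InHs 1 v → InHs 0 f →
      ∑' k : ℤ, (∑' p : ℤ × ℤ,
          |(p.1 : ℝ)| * ‖v p.1‖ * ‖v p.2‖ * ‖v (k - p.1 - p.2)‖) * ‖f k‖
        ≤ C * hnorm 0 f * hnorm 1 v ^ 3 := by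
  -- Adding `1` only serves to make positivity of the constant immediate.
  refine ⟨(l2norm sobolevWeight).toReal ^ 2 + 1, by positivity, fun v f hv hf => ?_⟩
  set W := (l2norm sobolevWeight).toReal with hW
  have hW0 : 0 ≤ W := ENNReal.toReal_nonneg
  have hn1 : 0 ≤ hnorm 1 v := Real.sqrt_nonneg _
  have hn0 : 0 ≤ hnorm 0 f := Real.sqrt_nonneg _
  have hB : ∑' k, ENNReal.ofReal ‖v k‖ ≤ ENNReal.ofReal (W * hnorm 1 v) := by
    rw [ENNReal.ofReal_mul hW0, hW, ENNReal.ofReal_toReal l2norm_sobolevWeight_ne_top]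
    exact tsum_norm_le_hnorm v hv
  have hA : l2norm (fun k : ℤ => ENNReal.ofReal (|(k : ℝ)| * ‖v k‖))
      ≤ ENNReal.ofReal (hnorm 1 v) := by
    refine l2norm_le_hnorm 1 v hv _ (fun k => by positivity) fun k => ?_
    rw [mul_pow, sq_abs, Real.rpow_one]
    gcongr
    linarith
  have hF : l2norm (fun k : ℤ => ENNReal.ofReal ‖f k‖) ≤ ENNReal.ofReal (hnorm 0 f) :=
    l2norm_le_hnorm 0 f hf _ (fun k => by positivity) fun k => by simp
  rw [← ENNReal.ofReal_le_ofReal_iff (by positivity)]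
  calc _ ≤ ∑' k : ℤ, ENNReal.ofReal ((∑' p : ℤ × ℤ,
          |(p.1 : ℝ)| * ‖v p.1‖ * ‖v p.2‖ * ‖v (k - p.1 - p.2)‖) * ‖f k‖) :=
        ofReal_tsum_le _ fun k => mul_nonneg (tsum_nonneg fun p => by positivity) (norm_nonneg _)
    _ ≤ ∑' k : ℤ, (∑' p : ℤ × ℤ, ENNReal.ofReal (|(p.1 : ℝ)| * ‖v p.1‖) * ENNReal.ofReal ‖v p.2‖
          * ENNReal.ofReal ‖v (k - p.1 - p.2)‖) * ENNReal.ofReal ‖f k‖ := by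
        refine ENNReal.tsum_le_tsum fun k => ?_
        rw [ENNReal.ofReal_mul' (norm_nonneg _)]
        gcongr
        refine (ofReal_tsum_le _ fun p => by positivity).trans_eq (tsum_congr fun p => ?_)
        rw [ENNReal.ofReal_mul (by positivity), ENNReal.ofReal_mul (by positivity)]
    _ ≤ _ := tsum_cubic_le (fun k : ℤ => ENNReal.ofReal (|(k : ℝ)| * ‖v k‖))
        (fun k => ENNReal.ofReal ‖v k‖) (fun k => ENNReal.ofReal ‖f k‖)
    _ ≤ ENNReal.ofReal (W * hnorm 1 v) * ENNReal.ofReal (W * hnorm 1 v)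
          * (ENNReal.ofReal (hnorm 1 v) * ENNReal.ofReal (hnorm 0 f)) := by gcongr
    _ = ENNReal.ofReal (W ^ 2 * hnorm 0 f * hnorm 1 v ^ 3) := by
        rw [← ENNReal.ofReal_mul (by positivity), ← ENNReal.ofReal_mul (by positivity),
          ← ENNReal.ofReal_mul (by positivity)]
        congr 1
        ring
    _ ≤ _ := by
        refine ENNReal.ofReal_le_ofReal ?_
        gcongr
        linarith

end
end

section
/- There is an absolute constant C such that for every real K≥2, every v∈H¹(𝕋) and every f∈L²(𝕋): ∑_{0<|k|≤K} [ ∑_{k₁+k₂+k₃=k, |k₂|≥|k₃|, |k₃|≤|k|} |k|^{−1}|k₁||k₂||k₃| |v̂_{k₁}||v̂_{k₂}||v̂_{k₃}| + ∑_{k₁+k₂+k₃=k, |k₂|≥|k₃|, |k₃|>|k|} |k₁||k₂| |v̂_{k₁}||v̂_{k₂}||v̂_{k₃}| ] |f̂_k| ≤ C √(ln K) ‖v‖_{H¹}³ ‖f‖_{L²}. -/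
/-! The derivatives are absorbed into `a k = |k| |v̂_k|`, which is square summable with
`∑ a² ≤ ‖v‖²_{H¹}`. For fixed `k` and `k₃`, the inequality `2xy ≤ x² + y²` bounds the sum of
`a_{k₁} a_{k₂}` over `k₁ + k₂ = k - k₃` by `∑ a²` (`tsum_conv_le`). What is left is a sum over `k₃` alone, namely
`|k|⁻¹ ∑_{|j| ≤ |k|} a_j` in the first case and `∑_{|j| > |k|} a_j / |j|` in the second; by
Cauchy–Schwarz (`tsum_le_sqrt_mul_sqrt`) both are `O(|k|^{-1/2}) (∑ a²)^{1/2}`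
(`low_freq_sum`, `high_freq_sum`). A last Cauchy–Schwarz against `|f̂_k|` leaves
`(∑_{0<|k|≤K} |k|⁻¹)^{1/2}`, which is `O(√(ln K))` (`sum_inv_abs_le`). -/

noncomputable section

open Complex MeasureTheory
open scoped BigOperators

/-- Cauchy–Schwarz for nonnegative series, with the summability of the dominated series as part
of the conclusion. The hypothesis on `c` bounds its finite partial sums, so `c` itself need not be
known to be square summable. -/
lemma tsum_le_sqrt_mul_sqrt {w c a : ℤ → ℝ} {A B : ℝ} (hw : ∀ j, 0 ≤ w j)
    (hwc : ∀ j, w j ≤ c j * a j) (hc : ∀ s : Finset ℤ, ∑ j ∈ s, c j ^ 2 ≤ B)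
    (ha : Summable fun j => a j ^ 2) (hA : ∑' j, a j ^ 2 ≤ A) :
    Summable w ∧ ∑' j, w j ≤ √B * √A := by
  have key : ∀ s : Finset ℤ, ∑ j ∈ s, w j ≤ √B * √A := by
    intro s
    calc ∑ j ∈ s, w j ≤ ∑ j ∈ s, c j * a j := Finset.sum_le_sum fun j _ => hwc j
      _ ≤ √(∑ j ∈ s, c j ^ 2) * √(∑ j ∈ s, a j ^ 2) := Real.sum_mul_le_sqrt_mul_sqrt _ _ _
      _ ≤ √B * √A := by
        gcongr
        · exact hc s
        · exact (ha.sum_le_tsum s fun _ _ => sq_nonneg _).trans hA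
  exact ⟨summable_of_sum_le hw key, Real.tsum_le_of_sum_le hw key⟩

/-- The trilinear sum over `k₁ + k₂ + k₃ = k`: the product `a_{k₁} a_{k₂}` is bounded by
`(a_{k₁}² + a_{k₂}²) / 2`, and each half is, after a change of variables, a product of two
one-dimensional series. -/
lemma tsum_conv_le {a w : ℤ → ℝ} {F : ℤ × ℤ → ℝ} (k : ℤ) (hw : ∀ j, 0 ≤ w j)
    (ha : Summable fun j => a j ^ 2) (hws : Summable w) (hF : ∀ p, 0 ≤ F p)
    (hFa : ∀ p, F p ≤ a p.1 * a p.2 * w (k - p.1 - p.2)) :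
    ∑' p, F p ≤ (∑' j, a j ^ 2) * ∑' j, w j := by
  let e₁ : ℤ × ℤ ≃ ℤ × ℤ :=
    { toFun := fun p => (p.1, k - p.1 - p.2)
      invFun := fun p => (p.1, k - p.1 - p.2)
      left_inv := fun p => by ext <;> simp
      right_inv := fun p => by ext <;> simp }
  let e₂ : ℤ × ℤ ≃ ℤ × ℤ :=
    { toFun := fun p => (p.2, k - p.1 - p.2)
      invFun := fun p => (k - p.1 - p.2, p.1)
      left_inv := fun p => by ext <;> grind
      right_inv := fun p => by ext <;> grind }
  have hprod : HasSum (fun p : ℤ × ℤ => a p.1 ^ 2 * w p.2) ((∑' j, a j ^ 2) * ∑' j, w j) :=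
    ha.hasSum.mul hws.hasSum (ha.mul_of_nonneg hws (fun _ => sq_nonneg _) hw)
  have h₁ := e₁.hasSum_iff.mpr hprod
  have h₂ := e₂.hasSum_iff.mpr hprod
  have h := (h₁.add h₂).div_const 2
  have hle : ∀ p, F p ≤ (((fun p : ℤ × ℤ => a p.1 ^ 2 * w p.2) ∘ e₁) p +
      ((fun p : ℤ × ℤ => a p.1 ^ 2 * w p.2) ∘ e₂) p) / 2 := by
    intro p
    refine (hFa p).trans ?_
    change _ ≤ (a p.1 ^ 2 * w (k - p.1 - p.2) + a p.2 ^ 2 * w (k - p.1 - p.2)) / 2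
    nlinarith [mul_nonneg (sq_nonneg (a p.1 - a p.2)) (hw (k - p.1 - p.2))]
  have hFs : Summable F := Summable.of_nonneg_of_le hF hle h.summable
  have := hasSum_le hle hFs.hasSum h
  linarith

/-- Each absolute value is attained by at most two integers. -/
lemma sum_natAbs_le (g : ℕ → ℝ) (hg : ∀ m, 0 ≤ g m) (s : Finset ℤ) (T : Finset ℕ)
    (hT : ∀ j ∈ s, j.natAbs ∈ T) : ∑ j ∈ s, g j.natAbs ≤ 2 * ∑ m ∈ T, g m := by
  rw [Finset.sum_comp g Int.natAbs, Finset.mul_sum]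
  calc ∑ m ∈ s.image Int.natAbs, (s.filter fun j => j.natAbs = m).card • g m
      ≤ ∑ m ∈ s.image Int.natAbs, 2 * g m := by
        refine Finset.sum_le_sum fun m _ => ?_
        have hsub : (s.filter fun j => j.natAbs = m) ⊆ {(m : ℤ), -(m : ℤ)} := by
          intro j hj
          simp only [Finset.mem_filter, Finset.mem_insert, Finset.mem_singleton] at hj ⊢
          omega
        have hcard : ((s.filter fun j => j.natAbs = m).card : ℝ) ≤ 2 := by
          exact_mod_cast (Finset.card_le_card hsub).trans Finset.card_le_two
        rw [nsmul_eq_mul]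
        exact mul_le_mul_of_nonneg_right hcard (hg m)
    _ ≤ ∑ m ∈ T, 2 * g m := by
        refine Finset.sum_le_sum_of_subset_of_nonneg ?_ fun m _ _ => mul_nonneg zero_le_two (hg m)
        intro m hm
        obtain ⟨j, hj, rfl⟩ := Finset.mem_image.mp hm
        exact hT j hj

lemma abs_cast_eq_natAbs (j : ℤ) : |(j : ℝ)| = (j.natAbs : ℝ) := by
  rw [Nat.cast_natAbs, Int.cast_abs]

lemma sum_inv_abs_le {K : ℝ} (hK : 2 ≤ K) (s : Finset ℤ) :
    ∑ k ∈ s, (if k ≠ 0 ∧ |(k : ℝ)| ≤ K then |(k : ℝ)|⁻¹ else 0) ≤ 6 * Real.log K := by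
  rw [← Finset.sum_filter]
  have h := sum_natAbs_le (fun m => (m : ℝ)⁻¹) (fun m => by positivity)
    (s.filter fun k : ℤ => k ≠ 0 ∧ |(k : ℝ)| ≤ K) (Finset.Icc 1 ⌊K⌋₊) (by
      intro j hj
      simp only [Finset.mem_filter] at hj
      rw [abs_cast_eq_natAbs] at hj
      exact Finset.mem_Icc.mpr ⟨by omega, Nat.le_floor hj.2.2⟩)
  have h2 := harmonic_floor_le_one_add_log K (by linarith)
  rw [harmonic_eq_sum_Icc] at h2
  push_cast at h2
  have h3 : (0.6931471803 : ℝ) < Real.log K :=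
    Real.log_two_gt_d9.trans_le (Real.log_le_log (by norm_num) hK)
  simp_rw [abs_cast_eq_natAbs] at h ⊢
  linarith

/-- The sum over `|k₃| ≤ |k|` in the first part of the trilinear form. -/
lemma low_freq_sum {a : ℤ → ℝ} {A : ℝ} (ha0 : ∀ j, 0 ≤ a j) (ha : Summable fun j => a j ^ 2)
    (hA : ∑' j, a j ^ 2 ≤ A) {k : ℤ} (hk : k ≠ 0) :
    Summable (fun j : ℤ => if |j| ≤ |k| then |(k : ℝ)|⁻¹ * a j else 0) ∧
      ∑' j : ℤ, (if |j| ≤ |k| then |(k : ℝ)|⁻¹ * a j else 0) ≤ √(4 * |(k : ℝ)|⁻¹) * √A := by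
  refine tsum_le_sqrt_mul_sqrt (c := fun j => if |j| ≤ |k| then |(k : ℝ)|⁻¹ else 0)
    (fun j => ?_) (fun j => ?_) (fun s => ?_) ha hA
  · split_ifs
    · exact mul_nonneg (by positivity) (ha0 j)
    · rfl
  · split_ifs <;> simp
  · have hk1 : (1 : ℝ) ≤ |(k : ℝ)| := by exact_mod_cast Int.one_le_abs hk
    simp only [ite_pow, ne_eq, OfNat.ofNat_ne_zero, not_false_eq_true, zero_pow]
    rw [← Finset.sum_filter, Finset.sum_const, nsmul_eq_mul]
    have hsub : (s.filter fun j => |j| ≤ |k|) ⊆ Finset.Icc (-|k|) |k| := by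
      intro j hj
      exact Finset.mem_Icc.mpr (abs_le.mp (Finset.mem_filter.mp hj).2)
    have hcard := Finset.card_le_card hsub
    rw [Int.card_Icc] at hcard
    have hcard' : (((s.filter fun j => |j| ≤ |k|).card : ℤ) : ℝ) ≤ ((2 * |k| + 1 : ℤ) : ℝ) := by
      have := abs_nonneg k
      exact_mod_cast (by omega : ((s.filter fun j => |j| ≤ |k|).card : ℤ) ≤ 2 * |k| + 1)
    push_cast at hcard'
    calc _ ≤ (4 * |(k : ℝ)|) * |(k : ℝ)|⁻¹ ^ 2 := by gcongr; linarith
      _ = 4 * |(k : ℝ)|⁻¹ := by field_simp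

/-- The sum over `|k₃| > |k|` in the second part of the trilinear form; the tail
`∑_{|j| > |k|} j⁻²` is of size `|k|⁻¹`. -/
lemma high_freq_sum {b : ℤ → ℝ} {A : ℝ} (hb0 : ∀ j, 0 ≤ b j)
    (ha : Summable fun j : ℤ => (|(j : ℝ)| * b j) ^ 2)
    (hA : ∑' j : ℤ, (|(j : ℝ)| * b j) ^ 2 ≤ A) {k : ℤ} (hk : k ≠ 0) :
    Summable (fun j : ℤ => if |k| < |j| then b j else 0) ∧
      ∑' j : ℤ, (if |k| < |j| then b j else 0) ≤ √(4 * |(k : ℝ)|⁻¹) * √A := by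
  refine tsum_le_sqrt_mul_sqrt (c := fun j => if |k| < |j| then |(j : ℝ)|⁻¹ else 0)
    (fun j => ?_) (fun j => ?_) (fun s => ?_) ha hA
  · split_ifs
    · exact hb0 j
    · rfl
  · split_ifs with h
    · have : (0 : ℝ) < |(j : ℝ)| := by exact_mod_cast (abs_nonneg k).trans_lt h
      rw [inv_mul_cancel_left₀ this.ne']
    · simp
  · simp only [ite_pow, ne_eq, OfNat.ofNat_ne_zero, not_false_eq_true, zero_pow]
    rw [← Finset.sum_filter]
    have h := sum_natAbs_le (fun m => ((m : ℝ) ^ 2)⁻¹) (fun m => by positivity)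
      (s.filter fun j : ℤ => |k| < |j|)
      (Finset.Ioo k.natAbs ((s.sup Int.natAbs) + 1)) (by
        intro j hj
        have hj := Finset.mem_filter.mp hj
        have := Finset.le_sup (f := Int.natAbs) hj.1
        exact Finset.mem_Ioo.mpr ⟨by have := hj.2; rw [Int.abs_eq_natAbs, Int.abs_eq_natAbs] at this; omega, by omega⟩)
    have h2 := sum_Ioo_inv_sq_le (α := ℝ) k.natAbs ((s.sup Int.natAbs) + 1)
    have hk1 : (0 : ℝ) < (k.natAbs : ℝ) := by exact_mod_cast Int.natAbs_pos.mpr hk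
    have h3 : 2 / ((k.natAbs : ℝ) + 1) ≤ 2 * (k.natAbs : ℝ)⁻¹ := by
      rw [← div_eq_mul_inv]
      gcongr
      linarith
    simp_rw [abs_cast_eq_natAbs, inv_pow]
    linarith

theorem log_sum_bound :
    ∃ C : ℝ, 0 < C ∧ ∀ K : ℝ, 2 ≤ K → ∀ v f : FSeq, InHs 1 v → InHs 0 f →
      ∑' k : ℤ, (if k ≠ 0 ∧ |(k : ℝ)| ≤ K then
        ((∑' p : ℤ × ℤ, if |k - p.1 - p.2| ≤ |p.2| ∧ |k - p.1 - p.2| ≤ |k| then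
            (|(k : ℝ)|)⁻¹ * |(p.1 : ℝ)| * |(p.2 : ℝ)| * |((k - p.1 - p.2 : ℤ) : ℝ)| *
              (‖v p.1‖ * ‖v p.2‖ * ‖v (k - p.1 - p.2)‖) else 0)
          + ∑' p : ℤ × ℤ, if |k - p.1 - p.2| ≤ |p.2| ∧ |k| < |k - p.1 - p.2| then
            |(p.1 : ℝ)| * |(p.2 : ℝ)| *
              (‖v p.1‖ * ‖v p.2‖ * ‖v (k - p.1 - p.2)‖) else 0) * ‖f k‖
        else 0)
      ≤ C * Real.sqrt (Real.log K) * hnorm 1 v ^ 3 * hnorm 0 f := by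
  -- `12 ≥ 4 √6`: the factor `4 = 2 + 2` comes from the two frequency regions and `√6` from the
  -- harmonic sum; `2π ≥ 1` is dropped from the norms.
  refine ⟨12, by norm_num, fun K hK v f hv hf => ?_⟩
  unfold InHs at hv hf
  unfold hnorm
  simp only [Real.rpow_one, Real.rpow_zero, one_mul] at hv hf ⊢
  set V := ∑' k : ℤ, (1 + (k : ℝ) ^ 2) * ‖v k‖ ^ 2 with hV
  set Φ := ∑' k : ℤ, ‖f k‖ ^ 2 with hΦ
  have hV0 : 0 ≤ V := tsum_nonneg fun k => by positivity
  have hΦ0 : 0 ≤ Φ := tsum_nonneg fun k => by positivity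
  have hle : ∀ k : ℤ, (|(k : ℝ)| * ‖v k‖) ^ 2 ≤ (1 + (k : ℝ) ^ 2) * ‖v k‖ ^ 2 := by
    intro k
    rw [mul_pow, sq_abs]
    gcongr
    linarith
  have ha : Summable fun k : ℤ => (|(k : ℝ)| * ‖v k‖) ^ 2 :=
    Summable.of_nonneg_of_le (fun _ => sq_nonneg _) hle hv
  have hA : ∑' k : ℤ, (|(k : ℝ)| * ‖v k‖) ^ 2 ≤ V := ha.tsum_le_tsum hle hv
  have hlog : 0 < Real.log K := Real.log_pos (by linarith)
  have main := tsum_le_sqrt_mul_sqrt (a := fun k => ‖f k‖) (A := Φ)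
    (B := (4 * (V * √V)) ^ 2 * (6 * Real.log K))
    (c := fun k : ℤ => 4 * (V * √V) * √(if k ≠ 0 ∧ |(k : ℝ)| ≤ K then |(k : ℝ)|⁻¹ else 0))
    (w := fun k : ℤ => (if k ≠ 0 ∧ |(k : ℝ)| ≤ K then
        ((∑' p : ℤ × ℤ, if |k - p.1 - p.2| ≤ |p.2| ∧ |k - p.1 - p.2| ≤ |k| then
            (|(k : ℝ)|)⁻¹ * |(p.1 : ℝ)| * |(p.2 : ℝ)| * |((k - p.1 - p.2 : ℤ) : ℝ)| *
              (‖v p.1‖ * ‖v p.2‖ * ‖v (k - p.1 - p.2)‖) else 0)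
          + ∑' p : ℤ × ℤ, if |k - p.1 - p.2| ≤ |p.2| ∧ |k| < |k - p.1 - p.2| then
            |(p.1 : ℝ)| * |(p.2 : ℝ)| *
              (‖v p.1‖ * ‖v p.2‖ * ‖v (k - p.1 - p.2)‖) else 0) * ‖f k‖
        else 0)) ?_ ?_ ?_ hf le_rfl
  · refine main.2.trans ?_
    rw [Real.sqrt_mul (by positivity), Real.sqrt_sq (by positivity),
      Real.sqrt_mul (by norm_num) (Real.log K)]
    have hpi : 1 ≤ 2 * Real.pi := by linarith [Real.pi_gt_three]
    have h6 : √6 ≤ 3 := by rw [Real.sqrt_le_left (by norm_num)]; norm_num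
    have hVs : √V ≤ √(2 * Real.pi * V) := Real.sqrt_le_sqrt (by nlinarith)
    have hΦs : √Φ ≤ √(2 * Real.pi * Φ) := Real.sqrt_le_sqrt (by nlinarith)
    have hcube : V * √V = √V ^ 3 := by
      nth_rewrite 1 [← Real.sq_sqrt hV0]
      ring
    rw [hcube]
    calc 4 * √V ^ 3 * (√6 * √(Real.log K)) * √Φ
        ≤ 4 * √(2 * Real.pi * V) ^ 3 * (3 * √(Real.log K)) * √(2 * Real.pi * Φ) := by gcongr
      _ = _ := by ring
  · intro k
    split_ifs
    · refine mul_nonneg (add_nonneg (tsum_nonneg fun p => ?_) (tsum_nonneg fun p => ?_))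
        (norm_nonneg _)
      · split_ifs <;> positivity
      · split_ifs <;> positivity
    · rfl
  · intro k
    split_ifs with hk
    · have hlow := low_freq_sum (fun j => by positivity) ha hA hk.1
      have hhigh := high_freq_sum (fun j => norm_nonneg (v j)) ha hA hk.1
      have hs4 : √(4 * |(k : ℝ)|⁻¹) = 2 * √(|(k : ℝ)|⁻¹) := by
        rw [Real.sqrt_mul (by norm_num), show (4 : ℝ) = 2 ^ 2 by norm_num,
          Real.sqrt_sq (by norm_num)]
      rw [hs4] at hlow hhigh
      gcongr
      have hfst := tsum_conv_le (F := fun p : ℤ × ℤ =>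
          if |k - p.1 - p.2| ≤ |p.2| ∧ |k - p.1 - p.2| ≤ |k| then
            (|(k : ℝ)|)⁻¹ * |(p.1 : ℝ)| * |(p.2 : ℝ)| * |((k - p.1 - p.2 : ℤ) : ℝ)| *
              (‖v p.1‖ * ‖v p.2‖ * ‖v (k - p.1 - p.2)‖) else 0) k
          (fun j => by split_ifs <;> positivity) ha hlow.1
          (fun p => by split_ifs <;> positivity) (by
            intro p
            split_ifs with h1 h2 h2
            · apply le_of_eq; ring
            · exact absurd h1.2 h2
            · positivity
            · simp)
      have hsnd := tsum_conv_le (F := fun p : ℤ × ℤ =>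
          if |k - p.1 - p.2| ≤ |p.2| ∧ |k| < |k - p.1 - p.2| then
            |(p.1 : ℝ)| * |(p.2 : ℝ)| *
              (‖v p.1‖ * ‖v p.2‖ * ‖v (k - p.1 - p.2)‖) else 0) k
          (fun j => by split_ifs <;> positivity) ha hhigh.1
          (fun p => by split_ifs <;> positivity) (by
            intro p
            split_ifs with h1 h2 h2
            · apply le_of_eq; ring
            · exact absurd h1.2 h2
            · positivity
            · simp)
      have hb1 := mul_le_mul hA hlow.2
        (tsum_nonneg fun j => by split_ifs <;> positivity) hV0
      have hb2 := mul_le_mul hA hhigh.2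
        (tsum_nonneg fun j => by split_ifs <;> positivity) hV0
      linarith
    · simp
  · intro s
    have h := sum_inv_abs_le hK s
    calc _ = ∑ k ∈ s, (4 * (V * √V)) ^ 2 *
          (if k ≠ 0 ∧ |(k : ℝ)| ≤ K then |(k : ℝ)|⁻¹ else 0) := by
          refine Finset.sum_congr rfl fun k _ => ?_
          rw [mul_pow, Real.sq_sqrt (by split_ifs <;> positivity)]
      _ ≤ _ := by
          rw [← Finset.mul_sum]
          gcongr

end
end
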